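/- Let w be a vertex of G at graph distance l ≥ 0 from the root e. For every real z with |z| < 1/m, the series A(z) = Σ_{k=0}^{∞} A_k z^k, B(z) = Σ_{k=0}^{∞} B_k z^k, and Σ_{r=0}^{∞} c_{l+r}(l) z^r all converge absolutely, and Σ_{r=0}^{∞} c_{l+r}(l) z^r = A(z)^l · B(z). -/

import Mathlib

open scoped InnerProductSpace
open Complex Real

section WalkCounting

open SimpleGraph

/-- The number of walks of length `k` ending at a fixed vertex `w` of a tree, starting from a vertex
at distance `d` from `w`, when `w` has degree `q` and every other vertex has degree `n + 1`. -/
def treeWalkCount (q n : ℕ) : ℕ → ℕ → ℕ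
  | 0, 0 => 1
  | 0, _ + 1 => 0
  | k + 1, 0 => q * treeWalkCount q n k 1
  | k + 1, d + 1 => treeWalkCount q n k d + n * treeWalkCount q n k (d + 2)

lemma treeWalkCount_le_pow {q n m : ℕ} (hq : q ≤ m) (hn : n + 1 ≤ m) (k d : ℕ) :
    treeWalkCount q n k d ≤ m ^ k := by
  induction k generalizing d with
  | zero => cases d <;> simp [treeWalkCount]
  | succ k ih =>
    rw [pow_succ']
    cases d with
    | zero => exact Nat.mul_le_mul hq (ih 1)
    | succ d =>
      calc treeWalkCount q n k d + n * treeWalkCount q n k (d + 2)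
          ≤ m ^ k + n * m ^ k := Nat.add_le_add (ih d) (Nat.mul_le_mul_left n (ih _))
        _ = (n + 1) * m ^ k := by ring
        _ ≤ m * m ^ k := Nat.mul_le_mul_right _ hn

/-- Walks of positive length are counted by their second vertex. -/
lemma card_walk_length_succ {V : Type*} (G : SimpleGraph V) [G.LocallyFinite] (k : ℕ) (v w : V) :
    Nat.card {p : G.Walk v w // p.length = k + 1} =
      ∑ u ∈ G.neighborFinset v, Nat.card {p : G.Walk u w // p.length = k} := by
  classical
  have hfin (u : V) : Finite {p : G.Walk u w // p.length = k} :=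
    .of_equiv _ (Equiv.subtypeEquivRight fun p ↦
      mem_finsetWalkLength_iff (G := G) (n := k) (p := p))
  let φ : (Σ u : G.neighborSet v, {p : G.Walk u w // p.length = k}) →
      {p : G.Walk v w // p.length = k + 1} :=
    fun x ↦ ⟨Walk.cons x.1.2 x.2.1, congrArg (· + 1) x.2.2⟩
  have hφ : Function.Bijective φ := by
    constructor
    · rintro ⟨⟨u, hu⟩, p, hp⟩ ⟨⟨u', hu'⟩, p', hp'⟩ h
      obtain ⟨h₁, h⟩ := Walk.cons.inj (congrArg Subtype.val h)
      obtain rfl : u = u' := h₁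
      obtain rfl : p = p' := eq_of_heq h
      rfl
    · rintro ⟨p, hp⟩
      cases p with
      | nil => simp at hp
      | cons hu p => exact ⟨⟨⟨_, hu⟩, p, by simpa using hp⟩, rfl⟩
  rw [← Nat.card_congr (Equiv.ofBijective φ hφ), Nat.card_sigma]
  exact (Finset.sum_subtype _ (fun u ↦ by simp)
    fun u ↦ Nat.card {p : G.Walk u w // p.length = k}).symm

/-- In an acyclic graph, a vertex other than `w` in the component of `w` has exactly one neighbor
closer to `w`. -/
lemma SimpleGraph.IsAcyclic.exists_adj_dist_eq {V : Type*} {G : SimpleGraph V} (hG : G.IsAcyclic)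
    {v w : V} {d : ℕ} (hd : G.dist v w = d + 1) :
    ∃ u, G.Adj v u ∧ G.dist u w = d ∧
      ∀ u', G.Adj v u' → u' ≠ u → G.dist u' w = d + 2 := by
  have hr : G.Reachable v w := Reachable.of_dist_ne_zero (by omega)
  obtain ⟨p, hp, hpl⟩ := hr.exists_path_of_dist
  cases p with
  | nil => simp at hd
  | @cons _ u _ hu p =>
    rw [Walk.length_cons] at hpl
    have hup := dist_le p
    have step (x : V) (hx : G.Adj v x) : G.dist x w = d ∨ G.dist x w = d + 2 := by
      have := hG.dist_eq_dist_add_one_of_adj_of_reachable w hx hr.symm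
      rw [dist_comm (u := w), dist_comm (u := w)] at this
      omega
    refine ⟨u, hu, by have := step u hu; omega, fun u' hu' hne ↦ ?_⟩
    refine (step u' hu').resolve_left fun h ↦ hne ?_
    obtain ⟨q, hq⟩ := (hu'.symm.reachable.trans hr).exists_walk_length_eq_dist
    have hqp : (Walk.cons hu' q).IsPath :=
      Walk.isPath_of_length_eq_dist _ (by rw [Walk.length_cons]; omega)
    have heq := congrArg Subtype.val ((hG.subsingleton_path v w).elim ⟨_, hqp⟩ ⟨_, hp⟩)
    exact (Walk.cons.inj heq).1

/-- The number of walks in an acyclic graph with prescribed degrees. -/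
lemma SimpleGraph.IsAcyclic.card_walk_length_eq {V : Type*} {G : SimpleGraph V} [G.LocallyFinite]
    (hG : G.IsAcyclic) {q n : ℕ} {w : V} (hw : G.degree w = q)
    (hn : ∀ v, G.Reachable v w → v ≠ w → G.degree v = n + 1) (k : ℕ) {v : V}
    (hv : G.Reachable v w) :
    Nat.card {p : G.Walk v w // p.length = k} = treeWalkCount q n k (G.dist v w) := by
  classical
  induction k generalizing v with
  | zero =>
    by_cases h : v = w
    · subst h
      rw [dist_self, treeWalkCount, Nat.card_eq_one_iff_unique]
      exact ⟨⟨fun p p' ↦ Subtype.ext <|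
        (Walk.length_eq_zero_iff.1 p.2).eq_nil.trans (Walk.length_eq_zero_iff.1 p'.2).eq_nil.symm⟩,
        ⟨⟨Walk.nil, rfl⟩⟩⟩
    · obtain ⟨d, hd⟩ := Nat.exists_eq_succ_of_ne_zero (hv.pos_dist_of_ne h).ne'
      rw [hd, treeWalkCount, Nat.card_eq_zero]
      exact .inl ⟨fun p ↦ h (Walk.eq_of_length_eq_zero p.2)⟩
  | succ k ih =>
    have hsum : Nat.card {p : G.Walk v w // p.length = k + 1} =
        ∑ u ∈ G.neighborFinset v, treeWalkCount q n k (G.dist u w) := by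
      rw [card_walk_length_succ]
      refine Finset.sum_congr rfl fun u hu ↦ ih ?_
      exact ((G.mem_neighborFinset v u).1 hu).symm.reachable.trans hv
    rw [hsum]
    by_cases h : v = w
    · subst h
      rw [dist_self, treeWalkCount, ← hw, ← card_neighborFinset_eq_degree, ← smul_eq_mul]
      refine Finset.sum_eq_card_nsmul fun u hu ↦ ?_
      rw [dist_eq_one_iff_adj.2 ((G.mem_neighborFinset v u).1 hu).symm]
    · obtain ⟨d, hd⟩ := Nat.exists_eq_succ_of_ne_zero (hv.pos_dist_of_ne h).ne'
      obtain ⟨u, hu, hud, hu'⟩ := hG.exists_adj_dist_eq hd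
      have hmem : u ∈ G.neighborFinset v := by simpa using hu
      rw [hd, treeWalkCount, ← Finset.add_sum_erase _ _ hmem, hud]
      congr 1
      have hcard : ((G.neighborFinset v).erase u).card = n := by
        rw [Finset.card_erase_of_mem hmem, card_neighborFinset_eq_degree, hn v hv h]
        rfl
      rw [Finset.sum_eq_card_nsmul (b := treeWalkCount q n k (d + 2)), hcard, smul_eq_mul]
      intro x hx
      rw [Finset.mem_erase, mem_neighborFinset] at hx
      rw [hu' x hx.2 hx.1]

/-- Walks avoiding an edge are the walks of the graph with this edge deleted. -/
lemma card_walk_notMem_edges {V : Type*} (G : SimpleGraph V) (x : Sym2 V) (u v : V) (k : ℕ) :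
    Nat.card {p : G.Walk u v // p.length = k ∧ x ∉ p.edges} =
      Nat.card {p : (G.deleteEdges {x}).Walk u v // p.length = k} := by
  have hle : G.deleteEdges {x} ≤ G := G.deleteEdges_le _
  refine (Nat.card_congr (Equiv.ofBijective
    (fun p : {p : (G.deleteEdges {x}).Walk u v // p.length = k} ↦
      (⟨p.1.mapLe hle, by simp [p.2], fun h ↦ ?_⟩ :
        {p : G.Walk u v // p.length = k ∧ x ∉ p.edges})) ⟨?_, ?_⟩)).symm
  · rw [Walk.edges_mapLe_eq_edges] at h
    simpa using p.1.edges_subset_edgeSet h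
  · intro p p' h
    exact Subtype.ext (Walk.map_injective_of_injective Function.injective_id _ _
      (congrArg Subtype.val h))
  · rintro ⟨p, hp, hx⟩
    exact ⟨⟨p.toDeleteEdge x hx, by simpa using hp⟩, Subtype.ext (by simp)⟩

/-- In an `m`-regular acyclic graph, the number of closed walks avoiding an edge at their base
vertex. -/
lemma card_closed_walk_notMem_edges {V : Type*} {G : SimpleGraph V} [G.LocallyFinite]
    (hG : G.IsAcyclic) {n : ℕ} (hdeg : ∀ v, G.degree v = n + 1) {e : V} {x : Sym2 V}
    (hx : x ∈ G.edgeSet) (hex : e ∈ x) (k : ℕ) :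
    Nat.card {p : G.Walk e e // p.length = k ∧ x ∉ p.edges} = treeWalkCount n n k 0 := by
  classical
  obtain ⟨f, rfl⟩ := hex
  have hle : G.deleteEdges {s(e, f)} ≤ G := G.deleteEdges_le _
  let _ : (G.deleteEdges {s(e, f)}).LocallyFinite := fun v ↦
    ((Set.toFinite (G.neighborSet v)).subset fun _ h ↦ hle h).fintype
  have hef : ¬ (G.deleteEdges {s(e, f)}).Reachable e f :=
    isBridge_iff.1 (isAcyclic_iff_forall_isBridge.1 hG hx)
  have he : (G.deleteEdges {s(e, f)}).degree e = n := by
    have : (G.deleteEdges {s(e, f)}).neighborFinset e = (G.neighborFinset e).erase f := by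
      ext u
      simp only [mem_neighborFinset, deleteEdges_adj, Finset.mem_erase, Set.mem_singleton_iff,
        Sym2.congr_right]
      exact and_comm
    rw [← card_neighborFinset_eq_degree, this, Finset.card_erase_of_mem (by simpa using hx),
      card_neighborFinset_eq_degree, hdeg]
    rfl
  have hv (v : V) (hr : (G.deleteEdges {s(e, f)}).Reachable v e) (hne : v ≠ e) :
      (G.deleteEdges {s(e, f)}).degree v = n + 1 := by
    have hvf : v ≠ f := fun h ↦ hef (h ▸ hr.symm)
    rw [← hdeg v, ← card_neighborFinset_eq_degree, ← card_neighborFinset_eq_degree]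
    congr 1
    ext u
    simp [deleteEdges_adj, hne, hvf]
  rw [card_walk_notMem_edges, (hG.anti hle).card_walk_length_eq he hv k (Reachable.refl e),
    dist_self]

end WalkCounting

section GeneratingFunctions

open PowerSeries

/-- The first step recursion determines a family of power series. -/
lemma first_step_recursion_unique {R : Type*} [CommRing R] {n : R} {s : R⟦X⟧} {u v : ℕ → R⟦X⟧}
    (hu₀ : u 0 = s + X * (C n * u 1)) (hv₀ : v 0 = s + X * (C n * v 1))
    (hu : ∀ d, u (d + 1) = X * (u d + C n * u (d + 2)))
    (hv : ∀ d, v (d + 1) = X * (v d + C n * v (d + 2))) : u = v := by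
  have key (k : ℕ) : ∀ d, coeff k (u d) = coeff k (v d) := by
    induction k with
    | zero =>
      intro d
      cases d with
      | zero => rw [hu₀, hv₀, map_add, map_add, coeff_zero_X_mul, coeff_zero_X_mul]
      | succ d => rw [hu, hv, coeff_zero_X_mul, coeff_zero_X_mul]
    | succ k ih =>
      intro d
      cases d with
      | zero =>
        rw [hu₀, hv₀]
        simp only [map_add, coeff_succ_X_mul, coeff_C_mul, ih]
      | succ d =>
        rw [hu, hv]
        simp only [map_add, coeff_succ_X_mul, coeff_C_mul, ih]
  exact funext fun d ↦ PowerSeries.ext fun k ↦ key k d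

/-- The generating function of `treeWalkCount` at a fixed distance. -/
noncomputable def treeWalkSeries (q n d : ℕ) : ℝ⟦X⟧ :=
  PowerSeries.mk fun k ↦ (treeWalkCount q n k d : ℝ)

lemma coeff_treeWalkSeries (q n d k : ℕ) :
    coeff k (treeWalkSeries q n d) = treeWalkCount q n k d :=
  coeff_mk _ _

lemma treeWalkSeries_zero (q n : ℕ) :
    treeWalkSeries q n 0 = 1 + X * (C (q : ℝ) * treeWalkSeries q n 1) := by
  ext k
  cases k with
  | zero =>
    rw [map_add, coeff_zero_X_mul, coeff_treeWalkSeries]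
    simp [treeWalkCount]
  | succ k =>
    rw [map_add, coeff_succ_X_mul, coeff_C_mul, coeff_treeWalkSeries, coeff_treeWalkSeries]
    simp [treeWalkCount, coeff_one]

lemma treeWalkSeries_succ (q n d : ℕ) :
    treeWalkSeries q n (d + 1) =
      X * (treeWalkSeries q n d + C (n : ℝ) * treeWalkSeries q n (d + 2)) := by
  ext k
  cases k with
  | zero =>
    rw [coeff_zero_X_mul, coeff_treeWalkSeries]
    simp [treeWalkCount]
  | succ k =>
    rw [coeff_succ_X_mul, map_add, coeff_C_mul, coeff_treeWalkSeries, coeff_treeWalkSeries,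
      coeff_treeWalkSeries]
    simp [treeWalkCount]

/-- Decomposition of a walk at its first visit to the endpoint. -/
lemma treeWalkSeries_succ_eq_mul (q n d : ℕ) :
    treeWalkSeries q n (d + 1) = X * treeWalkSeries q n 0 * treeWalkSeries n n d := by
  have h := first_step_recursion_unique (n := (n : ℝ)) (s := X * treeWalkSeries q n 0)
    (u := fun d ↦ treeWalkSeries q n (d + 1))
    (v := fun d ↦ X * treeWalkSeries q n 0 * treeWalkSeries n n d)
    (by rw [treeWalkSeries_succ]; ring)
    (by nth_rw 2 [treeWalkSeries_zero]; ring)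
    (fun d ↦ treeWalkSeries_succ q n (d + 1))
    (fun d ↦ by rw [treeWalkSeries_succ n n d]; ring)
  exact congrFun h d

lemma treeWalkSeries_eq_mul_pow (q n d : ℕ) :
    treeWalkSeries q n d = X ^ d * (treeWalkSeries n n 0 ^ d * treeWalkSeries q n 0) := by
  have diag (d : ℕ) : treeWalkSeries n n d = X ^ d * treeWalkSeries n n 0 ^ (d + 1) := by
    induction d with
    | zero => simp
    | succ d ih => rw [treeWalkSeries_succ_eq_mul, ih]; ring
  cases d with
  | zero => simp
  | succ d => rw [treeWalkSeries_succ_eq_mul, diag]; ring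

lemma coeff_mul_mul_pow (f g : ℝ⟦X⟧) (z : ℝ) (k : ℕ) :
    coeff k (f * g) * z ^ k = ∑ ij ∈ Finset.HasAntidiagonal.antidiagonal k,
      (coeff ij.1 f * z ^ ij.1) * (coeff ij.2 g * z ^ ij.2) := by
  rw [coeff_mul, Finset.sum_mul]
  refine Finset.sum_congr rfl fun ij hij ↦ ?_
  rw [← Finset.HasAntidiagonal.mem_antidiagonal.1 hij, pow_add]
  ring

/-- Mertens' theorem for the evaluation of a product of power series. -/
lemma summable_norm_and_tsum_coeff_mul {f g : ℝ⟦X⟧} {z : ℝ}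
    (hf : Summable fun k ↦ ‖coeff k f * z ^ k‖) (hg : Summable fun k ↦ ‖coeff k g * z ^ k‖) :
    (Summable fun k ↦ ‖coeff k (f * g) * z ^ k‖) ∧
      ∑' k, coeff k (f * g) * z ^ k =
        (∑' k, coeff k f * z ^ k) * ∑' k, coeff k g * z ^ k := by
  simp only [coeff_mul_mul_pow]
  exact ⟨summable_norm_sum_mul_antidiagonal_of_summable_norm
      (f := fun k ↦ coeff k f * z ^ k) (g := fun k ↦ coeff k g * z ^ k) hf hg,
    (tsum_mul_tsum_eq_tsum_sum_antidiagonal_of_summable_norm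
      (f := fun k ↦ coeff k f * z ^ k) (g := fun k ↦ coeff k g * z ^ k) hf hg).symm⟩

lemma summable_norm_and_tsum_coeff_pow_mul {f g : ℝ⟦X⟧} {z : ℝ}
    (hf : Summable fun k ↦ ‖coeff k f * z ^ k‖) (hg : Summable fun k ↦ ‖coeff k g * z ^ k‖)
    (l : ℕ) :
    (Summable fun k ↦ ‖coeff k (f ^ l * g) * z ^ k‖) ∧
      ∑' k, coeff k (f ^ l * g) * z ^ k =
        (∑' k, coeff k f * z ^ k) ^ l * ∑' k, coeff k g * z ^ k := by
  induction l with
  | zero => simpa using hg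
  | succ l ih =>
    rw [pow_succ', mul_assoc, pow_succ', mul_assoc, ← ih.2]
    exact summable_norm_and_tsum_coeff_mul hf ih.1

lemma summable_norm_treeWalkSeries {q n m : ℕ} (hq : q ≤ m) (hn : n + 1 ≤ m) {z : ℝ}
    (hz : |z| < 1 / m) :
    Summable fun k ↦ ‖coeff k (treeWalkSeries q n 0) * z ^ k‖ := by
  have hm : (0 : ℝ) < m := by exact_mod_cast (Nat.succ_pos n).trans_le hn
  have hmz : (m : ℝ) * |z| < 1 := by rwa [lt_div_iff₀' hm] at hz
  refine Summable.of_nonneg_of_le (fun _ ↦ norm_nonneg _) (fun k ↦ ?_)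
    (summable_geometric_of_lt_one (by positivity) hmz)
  rw [coeff_treeWalkSeries, norm_mul, norm_pow, Real.norm_natCast, Real.norm_eq_abs, mul_pow]
  gcongr
  exact_mod_cast treeWalkCount_le_pow hq hn k 0

end GeneratingFunctions

/-- **Generating-function identity for walks on the `m`-regular tree:** for `|z| < 1/m`
the series `A(z) = ∑ A_k z^k`, `B(z) = ∑ B_k z^k` and `∑ c_{l+r}(l) z^r` converge
absolutely, and `∑_{r} c_{l+r}(l) z^r = A(z)^l B(z)`. -/
theorem stmt_13
    (m : ℕ) (hm : 3 ≤ m)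
    (V : Type) (G : SimpleGraph V)
    [∀ v : V, Fintype (G.neighborSet v)]
    (hconn : G.Connected) (hacyc : G.IsAcyclic)
    (hdeg : ∀ v : V, G.degree v = m)
    (e : V) (x₁ : Sym2 V) (hx₁ : x₁ ∈ G.edgeSet) (hex₁ : e ∈ x₁)
    (A : ℕ → ℕ)
    (hA : ∀ k : ℕ, A k = Nat.card {p : G.Walk e e // p.length = k ∧ x₁ ∉ p.edges})
    (B : ℕ → ℕ)
    (hB : ∀ k : ℕ, B k = Nat.card {p : G.Walk e e // p.length = k})
    (c : ℕ → V → ℕ)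
    (hc : ∀ (k : ℕ) (w : V), c k w = Nat.card {p : G.Walk e w // p.length = k})
    (l : ℕ) (w : V) (hw : G.dist e w = l)
    (z : ℝ) (hz : |z| < 1 / m) :
    Summable (fun k : ℕ => |(A k : ℝ) * z ^ k|) ∧
    Summable (fun k : ℕ => |(B k : ℝ) * z ^ k|) ∧
    Summable (fun r : ℕ => |(c (l + r) w : ℝ) * z ^ r|) ∧
    (∑' r : ℕ, (c (l + r) w : ℝ) * z ^ r) =
      (∑' k : ℕ, (A k : ℝ) * z ^ k) ^ l * (∑' k : ℕ, (B k : ℝ) * z ^ k) := by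
  obtain ⟨n, rfl⟩ : ∃ n, m = n + 1 := ⟨m - 1, by omega⟩
  have hAs (k : ℕ) : (A k : ℝ) = PowerSeries.coeff k (treeWalkSeries n n 0) := by
    rw [coeff_treeWalkSeries, hA, card_closed_walk_notMem_edges hacyc hdeg hx₁ hex₁]
  have hcount (v u : V) (k : ℕ) : Nat.card {p : G.Walk v u // p.length = k} =
      treeWalkCount (n + 1) n k (G.dist v u) :=
    hacyc.card_walk_length_eq (hdeg u) (fun v _ _ ↦ hdeg v) k (hconn v u)
  have hBs (k : ℕ) : (B k : ℝ) = PowerSeries.coeff k (treeWalkSeries (n + 1) n 0) := by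
    rw [coeff_treeWalkSeries, hB, hcount, SimpleGraph.dist_self]
  have hcs (r : ℕ) : (c (l + r) w : ℝ) = PowerSeries.coeff r
      (treeWalkSeries n n 0 ^ l * treeWalkSeries (n + 1) n 0) := by
    rw [← PowerSeries.coeff_X_pow_mul _ l r, ← treeWalkSeries_eq_mul_pow, coeff_treeWalkSeries,
      hc, hcount, hw, add_comm r l]
  have hAsum := summable_norm_treeWalkSeries n.le_succ le_rfl hz
  have hBsum := summable_norm_treeWalkSeries (q := n + 1) le_rfl le_rfl hz
  simp only [hAs, hBs, hcs]
  exact ⟨hAsum, hBsum, summable_norm_and_tsum_coeff_pow_mul hAsum hBsum l⟩
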